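/- arXiv:2408.05424 — 6 statements merged into one kernel-verified Lean document; each statement's English description precedes it below -/
import Mathlib

section
/- Let G be a finite simple graph with maximum degree Δ and minimum degree δ, and let v_i v_j be any edge of G whose degree pair is not {Δ, δ}, i.e., it is not the case that one endpoint has degree Δ and the other has degree δ. Then d_i·d_j/(d_i² + d_j²) ≥ (Δ−1)·δ/((Δ−1)² + δ²). -/
/-!
Write `f x y = x y / (x² + y²)`. After clearing denominators, `f x y ≤ f a b` is the nonnegativity
of `(x b - a y) (x a - b y)`. With `x = Δ - 1`, `y = δ` and `a`, `b` the two degrees, both factors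
are nonnegative by integrality: if `a = Δ`, then `b ≠ δ` forces `b ≥ δ + 1`, and
`Δ δ ≤ (Δ - 1) (δ + 1)` because `δ ≤ Δ - 1`.
-/

theorem mul_div_sq_add_sq_le_mul_div_sq_add_sq {K : Type*} [Field K] [LinearOrder K]
    [IsStrictOrderedRing K] {a b x y : K} (hxy : 0 < x ^ 2 + y ^ 2) (hab : 0 < a ^ 2 + b ^ 2)
    (hle : a * y ≤ x * b) (hle' : b * y ≤ x * a) :
    x * y / (x ^ 2 + y ^ 2) ≤ a * b / (a ^ 2 + b ^ 2) := by
  rw [div_le_div_iff₀ hxy hab, ← sub_nonneg]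
  calc
    0 ≤ (x * b - a * y) * (x * a - b * y) :=
      mul_nonneg (sub_nonneg.2 hle) (sub_nonneg.2 hle')
    _ = a * b * (x ^ 2 + y ^ 2) - x * y * (a ^ 2 + b ^ 2) := by ring

theorem mul_le_mul_of_le_succ_of_ne {a b d p : ℕ} (ha : a ≤ p + 1) (hb : d ≤ b) (hd : d ≤ p)
    (hne : ¬(a = p + 1 ∧ b = d)) : a * d ≤ p * b := by
  rcases Nat.le_succ_iff.1 ha with hap | rfl
  · exact Nat.mul_le_mul hap hb
  · have hdb : d + 1 ≤ b := by lia
    calc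
      (p + 1) * d = p * d + d := by ring
      _ ≤ p * d + p := by gcongr
      _ = p * (d + 1) := by ring
      _ ≤ p * b := by gcongr

section Degree

variable {V : Type*} [Fintype V] {G : SimpleGraph V} [DecidableRel G.Adj] {v w : V}

theorem minDegree_lt_maxDegree_of_not_extremal
    (hne : ¬(G.degree v = G.maxDegree ∧ G.degree w = G.minDegree)) :
    G.minDegree < G.maxDegree := by
  have hv := G.degree_le_maxDegree v
  have hv' := G.minDegree_le_degree v
  have hw := G.degree_le_maxDegree w
  have hw' := G.minDegree_le_degree w
  lia

theorem degree_mul_minDegree_le_of_not_extremal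
    (hne : ¬(G.degree v = G.maxDegree ∧ G.degree w = G.minDegree)) :
    (G.degree v : ℝ) * G.minDegree ≤ (G.maxDegree - 1) * G.degree w := by
  have hlt := minDegree_lt_maxDegree_of_not_extremal hne
  obtain ⟨p, hp⟩ := Nat.exists_eq_add_one_of_ne_zero hlt.ne_bot
  have hv : G.degree v ≤ p + 1 := hp ▸ G.degree_le_maxDegree v
  have hnat : G.degree v * G.minDegree ≤ p * G.degree w :=
    mul_le_mul_of_le_succ_of_ne hv (G.minDegree_le_degree w) (by lia) (hp ▸ hne)
  rw [hp, Nat.cast_add_one, add_sub_cancel_right]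
  exact_mod_cast hnat

end Degree

theorem stmt_1_general {V : Type*} [Fintype V] (G : SimpleGraph V) [DecidableRel G.Adj]
    (vi vj : V) (hpos : 0 < G.degree vi ∨ 0 < G.degree vj) (hΔ : 2 ≤ G.maxDegree)
    (hne : ¬((G.degree vi = G.maxDegree ∧ G.degree vj = G.minDegree) ∨
             (G.degree vi = G.minDegree ∧ G.degree vj = G.maxDegree))) :
    ((G.degree vi : ℝ) * (G.degree vj : ℝ)) /
        ((G.degree vi : ℝ) ^ 2 + (G.degree vj : ℝ) ^ 2) ≥
      (((G.maxDegree : ℝ) - 1) * (G.minDegree : ℝ)) /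
        (((G.maxDegree : ℝ) - 1) ^ 2 + (G.minDegree : ℝ) ^ 2) := by
  obtain ⟨hij, hji⟩ := not_or.1 hne
  have hΔ_pos : (0 : ℝ) < G.maxDegree - 1 := sub_pos.2 (by exact_mod_cast hΔ)
  have hdeg_pos : (0 : ℝ) < (G.degree vi : ℝ) ^ 2 + (G.degree vj : ℝ) ^ 2 := by
    rcases hpos with hi | hj <;> positivity
  exact mul_div_sq_add_sq_le_mul_div_sq_add_sq (by positivity) hdeg_pos
    (degree_mul_minDegree_le_of_not_extremal hij)
    (degree_mul_minDegree_le_of_not_extremal fun h => hji h.symm)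

/-- For any edge `v_i v_j` of a finite simple graph `G` (with `Δ ≥ 2`)
whose degree pair is not `{Δ, δ}`, one has
`d_i·d_j/(d_i² + d_j²) ≥ (Δ−1)·δ/((Δ−1)² + δ²)`. -/
theorem stmt_1 {V : Type*} [Fintype V] [DecidableEq V] (G : SimpleGraph V)
    [DecidableRel G.Adj] (vi vj : V) (hadj : G.Adj vi vj)
    (hΔ : 2 ≤ G.maxDegree)
    (hne : ¬((G.degree vi = G.maxDegree ∧ G.degree vj = G.minDegree) ∨
             (G.degree vi = G.minDegree ∧ G.degree vj = G.maxDegree))) :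
    ((G.degree vi : ℝ) * (G.degree vj : ℝ)) /
        ((G.degree vi : ℝ) ^ 2 + (G.degree vj : ℝ) ^ 2) ≥
      (((G.maxDegree : ℝ) - 1) * (G.minDegree : ℝ)) /
        (((G.maxDegree : ℝ) - 1) ^ 2 + (G.minDegree : ℝ) ^ 2) :=
  stmt_1_general G vi vj (.inl hadj.degree_pos_left) hΔ hne
end

section
/- Let T be a tree of order n ≥ 4 and let v_i v_j be any edge of T whose degree pair {d_i, d_j} is not {n−1, 1}. Then d_i·d_j/(d_i² + d_j²) ≥ (n−2)/((n−2)² + 1) > (n−1)/((n−1)² + 1). -/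
/-!
A tree has no triangles, so the neighbourhoods of the two ends of an edge are disjoint and the two
degrees add up to at most `n`. Hence a degree of `n - 1` forces the other one to be `1`, and outside
that case both degrees lie between `1` and `n - 2`, so each is at most `n - 2` times the other. For
`m = n - 2` the first inequality is then `(m * a - b) * (m * b - a) ≥ 0`; the second one is the
strict decrease of `x / (x ^ 2 + 1)` on `[1, ∞)`.
-/

section Ratio

variable {K : Type*} [Field K] [LinearOrder K] [IsStrictOrderedRing K]

theorem strictAntiOn_div_sq_add_one :
    StrictAntiOn (fun x : K ↦ x / (x ^ 2 + 1)) (Set.Ici 1) := by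
  intro x (hx : 1 ≤ x) y _ hxy
  have hmul : 1 < x * y := one_lt_mul_of_le_of_lt hx (hx.trans_lt hxy)
  rw [div_lt_div_iff₀ (by positivity) (by positivity), ← sub_pos]
  calc 0 < (y - x) * (x * y - 1) := mul_pos (sub_pos.2 hxy) (sub_pos.2 hmul)
    _ = x * (y ^ 2 + 1) - y * (x ^ 2 + 1) := by ring

theorem div_sq_add_one_le_mul_div_sq_add_sq {a b m : K} (ha : a ≠ 0) (hba : b ≤ m * a)
    (hab : a ≤ m * b) : m / (m ^ 2 + 1) ≤ a * b / (a ^ 2 + b ^ 2) := by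
  rw [div_le_div_iff₀ (by positivity) (by positivity), ← sub_nonneg]
  calc 0 ≤ (m * a - b) * (m * b - a) := mul_nonneg (sub_nonneg.2 hba) (sub_nonneg.2 hab)
    _ = a * b * (m ^ 2 + 1) - m * (a ^ 2 + b ^ 2) := by ring

end Ratio

section Graph

variable {V : Type*} {G : SimpleGraph V} {v w : V}

theorem commonNeighbors_eq_empty_of_cliqueFree_three (hG : G.CliqueFree 3) (hvw : G.Adj v w) :
    G.commonNeighbors v w = ∅ := by
  classical
  refine Set.eq_empty_of_forall_notMem fun u hu ↦ hG {v, w, u} ?_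
  exact SimpleGraph.is3Clique_triple_iff.2 ⟨hvw, G.mem_commonNeighbors.1 hu⟩

variable [Fintype V] [DecidableRel G.Adj]

theorem degree_add_degree_le_card_of_commonNeighbors_eq_empty
    (h : G.commonNeighbors v w = ∅) : G.degree v + G.degree w ≤ Fintype.card V := by
  classical
  have hdisj : Disjoint (G.neighborFinset v) (G.neighborFinset w) := by
    rw [← Finset.disjoint_coe, G.coe_neighborFinset, G.coe_neighborFinset]
    exact Set.disjoint_iff_inter_eq_empty.2 h
  calc G.degree v + G.degree w = (G.neighborFinset v ∪ G.neighborFinset w).card :=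
        (Finset.card_union_of_disjoint hdisj).symm
    _ ≤ Fintype.card V := Finset.card_le_univ _

theorem stmt_7_general (hvw : G.Adj v w) (hcommon : G.commonNeighbors v w = ∅)
    (hne : ¬((G.degree v = Fintype.card V - 1 ∧ G.degree w = 1) ∨
             (G.degree v = 1 ∧ G.degree w = Fintype.card V - 1))) :
    (G.degree v : ℝ) * G.degree w / ((G.degree v : ℝ) ^ 2 + (G.degree w : ℝ) ^ 2) ≥
      ((Fintype.card V : ℝ) - 2) / (((Fintype.card V : ℝ) - 2) ^ 2 + 1) ∧
    ((Fintype.card V : ℝ) - 2) / (((Fintype.card V : ℝ) - 2) ^ 2 + 1) >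
      ((Fintype.card V : ℝ) - 1) / (((Fintype.card V : ℝ) - 1) ^ 2 + 1) := by
  have hv : 1 ≤ G.degree v := hvw.degree_pos_left
  have hw : 1 ≤ G.degree w := hvw.degree_pos_right
  have hsum := degree_add_degree_le_card_of_commonNeighbors_eq_empty hcommon
  have hv_le : G.degree v + 2 ≤ Fintype.card V := by omega
  have hw_le : G.degree w + 2 ≤ Fintype.card V := by omega
  rify at hv hw hv_le hw_le
  rw [← le_sub_iff_add_le] at hv_le hw_le
  have hcard : (1 : ℝ) ≤ Fintype.card V - 2 := hv.trans hv_le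
  have hcard_nonneg : (0 : ℝ) ≤ Fintype.card V - 2 := zero_le_one.trans hcard
  constructor
  · exact div_sq_add_one_le_mul_div_sq_add_sq (by positivity)
      (hw_le.trans (le_mul_of_one_le_right hcard_nonneg hv))
      (hv_le.trans (le_mul_of_one_le_right hcard_nonneg hw))
  · have hlt : (Fintype.card V : ℝ) - 2 < Fintype.card V - 1 := by linarith
    exact strictAntiOn_div_sq_add_one hcard (hcard.trans hlt.le) hlt

end Graph

/-- For a tree `T` of order `n ≥ 4` and any edge `v_i v_j` of `T`
whose degree pair is not `{n−1, 1}`, one has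
`d_i·d_j/(d_i² + d_j²) ≥ (n−2)/((n−2)² + 1) > (n−1)/((n−1)² + 1)`. -/
theorem stmt_7 {V : Type*} [Fintype V] [DecidableEq V] (T : SimpleGraph V)
    [DecidableRel T.Adj] (n : ℕ) (hn : 4 ≤ n) (hcard : Fintype.card V = n)
    (htree : T.IsTree) (vi vj : V) (hadj : T.Adj vi vj)
    (hne : ¬((T.degree vi = n - 1 ∧ T.degree vj = 1) ∨
             (T.degree vi = 1 ∧ T.degree vj = n - 1))) :
    ((T.degree vi : ℝ) * (T.degree vj : ℝ)) /
        ((T.degree vi : ℝ) ^ 2 + (T.degree vj : ℝ) ^ 2) ≥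
      ((n : ℝ) - 2) / (((n : ℝ) - 2) ^ 2 + 1) ∧
    ((n : ℝ) - 2) / (((n : ℝ) - 2) ^ 2 + 1) > ((n : ℝ) - 1) / (((n : ℝ) - 1) ^ 2 + 1) := by
  subst hcard
  exact stmt_7_general hadj
    (commonNeighbors_eq_empty_of_cliqueFree_three (htree.isAcyclic.cliqueFree le_rfl) hadj) hne
end

section
/- Let G be a finite simple graph with m edges and maximum degree Δ ≥ 2, and let k be the number of edges v_i v_j of G with d_i = d_j. Then ISDD(G) ≤ k/2 + (Δ·(Δ−1)/(Δ² + (Δ−1)²))·(m − k). -/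
/-- The inverse symmetric division deg index
`ISDD(G) = Σ_{v_i v_j ∈ E(G)} d_i·d_j/(d_i² + d_j²)`. -/
noncomputable def ISDD {V : Type*} [Fintype V] [DecidableEq V] (G : SimpleGraph V)
    [DecidableRel G.Adj] : ℝ :=
  ∑ e ∈ G.edgeFinset,
    Sym2.lift ⟨fun i j => ((G.degree i : ℝ) * (G.degree j : ℝ)) /
      ((G.degree i : ℝ) ^ 2 + (G.degree j : ℝ) ^ 2), by intro a b; ring⟩ e

/-!
The weight `a·b/(a² + b²)` is at most `1/2` by AM-GM, and it increases with the ratio `a/b ≤ 1`.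
For unequal degrees `a < b ≤ Δ` we have `a/b ≤ 1 - 1/b ≤ 1 - 1/Δ = (Δ - 1)/Δ`, so the weight is
largest at the pair `(Δ - 1, Δ)`.
-/

section PairBounds

variable {K : Type*} [Field K] [LinearOrder K] [IsStrictOrderedRing K]

theorem mul_div_sq_add_sq_le_half (a b : K) : a * b / (a ^ 2 + b ^ 2) ≤ 1 / 2 :=
  div_le_of_le_mul₀ (by positivity) (by positivity) (by linarith [two_mul_le_add_sq a b])

theorem mul_div_sq_add_sq_le_of_div_le_div {a b c d : K} (ha : 0 ≤ a) (hb : 0 < b) (hd : 0 < d)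
    (hcd : c ≤ d) (h : a / b ≤ c / d) :
    a * b / (a ^ 2 + b ^ 2) ≤ c * d / (c ^ 2 + d ^ 2) := by
  have cross : a * d ≤ c * b := (div_le_div_iff₀ hb hd).mp h
  have hab : a ≤ b := le_of_mul_le_mul_right
    (by linarith [mul_le_mul_of_nonneg_right hcd hb.le]) hd
  have diag : a * c ≤ b * d :=
    (mul_le_mul_of_nonneg_left hcd ha).trans (mul_le_mul_of_nonneg_right hab hd.le)
  have factored : 0 ≤ (c * b - a * d) * (b * d - a * c) :=
    mul_nonneg (sub_nonneg.mpr cross) (sub_nonneg.mpr diag)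
  rw [div_le_div_iff₀ (by positivity) (by positivity)]
  linarith

theorem mul_div_sq_add_sq_le_of_add_one_le {a b D : K} (ha : 0 ≤ a) (hab : a + 1 ≤ b)
    (hbD : b ≤ D) :
    a * b / (a ^ 2 + b ^ 2) ≤ D * (D - 1) / (D ^ 2 + (D - 1) ^ 2) := by
  have hb : 0 < b := by linarith
  have hD : 0 < D := hb.trans_le hbD
  have ratio : a / b ≤ (D - 1) / D :=
    calc a / b ≤ (b - 1) / b := by gcongr; linarith
      _ = 1 - 1 / b := by rw [sub_div, div_self hb.ne']
      _ ≤ 1 - 1 / D := by gcongr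
      _ = (D - 1) / D := by rw [sub_div, div_self hD.ne']
  rw [mul_comm D, add_comm (D ^ 2)]
  exact mul_div_sq_add_sq_le_of_div_le_div ha hb hD (sub_le_self D zero_le_one) ratio

end PairBounds

theorem sum_le_card_filter_mul_add {ι R : Type*} [Ring R] [PartialOrder R]
    [IsOrderedAddMonoid R] (s : Finset ι) (p : ι → Prop) [DecidablePred p] {f : ι → R} {A B : R}
    (hA : ∀ i ∈ s, p i → f i ≤ A) (hB : ∀ i ∈ s, ¬ p i → f i ≤ B) :
    ∑ i ∈ s, f i ≤ (s.filter p).card * A + (s.card - (s.filter p).card) * B := by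
  have card_compl : (s.card : R) - (s.filter p).card = (s.filter (¬ p ·)).card := by
    rw [← Finset.card_filter_add_card_filter_not (s := s) p, Nat.cast_add, add_sub_cancel_left]
  rw [card_compl, ← Finset.sum_filter_add_sum_filter_not s p, ← nsmul_eq_mul, ← nsmul_eq_mul]
  gcongr
  · exact Finset.sum_le_card_nsmul _ _ _ (by simpa using hA)
  · exact Finset.sum_le_card_nsmul _ _ _ (by simpa using hB)

/-- The contribution `a·b/(a² + b²)` to the ISDD index of an edge whose endpoints have degrees
`a` and `b`, as a function of the unordered pair of degrees. The pair `s(0, 0)` gets the value `0`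
by the convention for division by zero. -/
noncomputable def isddWeight : Sym2 ℕ → ℝ :=
  Sym2.lift ⟨fun a b => (a * b : ℝ) / ((a : ℝ) ^ 2 + (b : ℝ) ^ 2), fun a b => by ring⟩

theorem isddWeight_mk (a b : ℕ) :
    isddWeight s(a, b) = (a * b : ℝ) / ((a : ℝ) ^ 2 + (b : ℝ) ^ 2) :=
  rfl

theorem ISDD_eq_sum_isddWeight {V : Type*} [Fintype V] [DecidableEq V] (G : SimpleGraph V)
    [DecidableRel G.Adj] :
    ISDD G = ∑ e ∈ G.edgeFinset, isddWeight (e.map fun v => G.degree v) :=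
  Finset.sum_congr rfl fun e _ => e.ind fun _ _ => rfl

theorem isddWeight_le_half (z : Sym2 ℕ) : isddWeight z ≤ 1 / 2 :=
  z.ind fun a b => mul_div_sq_add_sq_le_half (a : ℝ) b

theorem isddWeight_le_of_not_isDiag {z : Sym2 ℕ} {D : ℕ} (hz : ¬ z.IsDiag)
    (hD : ∀ n ∈ z, n ≤ D) :
    isddWeight z ≤ ((D : ℝ) * ((D : ℝ) - 1)) / ((D : ℝ) ^ 2 + ((D : ℝ) - 1) ^ 2) := by
  induction z with | _ a b
  wlog hab : a < b generalizing a b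
  · have hba : b < a := (not_lt.mp hab).lt_of_ne' (by simpa using hz)
    rw [Sym2.eq_swap] at hz hD ⊢
    exact this b a hz hD hba
  rw [isddWeight_mk]
  exact mul_div_sq_add_sq_le_of_add_one_le a.cast_nonneg (by exact_mod_cast hab)
    (by exact_mod_cast hD b (Sym2.mem_mk_right a b))

/-- If `G` has `m` edges, maximum degree `Δ ≥ 2`, and `k` edges whose
endpoints have equal degrees, then `ISDD(G) ≤ k/2 + (Δ·(Δ−1)/(Δ²+(Δ−1)²))·(m − k)`. -/
theorem stmt_11 {V : Type*} [Fintype V] [DecidableEq V] (G : SimpleGraph V)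
    [DecidableRel G.Adj] (hΔ : 2 ≤ G.maxDegree) (m k : ℕ)
    (hm : m = G.edgeFinset.card)
    (hk : k = (G.edgeFinset.filter
      (fun e => (Sym2.map (fun v => G.degree v) e).IsDiag)).card) :
    ISDD G ≤ (k : ℝ) / 2 +
      ((G.maxDegree : ℝ) * ((G.maxDegree : ℝ) - 1)) /
        ((G.maxDegree : ℝ) ^ 2 + ((G.maxDegree : ℝ) - 1) ^ 2) * ((m : ℝ) - (k : ℝ)) := by
  subst hm hk
  rw [ISDD_eq_sum_isddWeight, div_eq_mul_one_div (Nat.cast _), mul_comm (_ / _)]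
  refine sum_le_card_filter_mul_add _ _ (fun e _ _ => isddWeight_le_half _) fun e _ he => ?_
  refine isddWeight_le_of_not_isDiag he fun n hn => ?_
  obtain ⟨v, -, rfl⟩ := Sym2.mem_map.mp hn
  exact G.degree_le_maxDegree v
end

section
/- Let G be a finite simple graph with m ≥ 1 edges. Then ISDD(G) ≥ GA(G)²/(4m). -/
/-- The geometric-arithmetic index
`GA(G) = Σ_{v_i v_j ∈ E(G)} 2·√(d_i·d_j)/(d_i + d_j)`. -/
noncomputable def GA {V : Type*} [Fintype V] [DecidableEq V] (G : SimpleGraph V)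
    [DecidableRel G.Adj] : ℝ :=
  ∑ e ∈ G.edgeFinset,
    Sym2.lift ⟨fun i j => 2 * Real.sqrt ((G.degree i : ℝ) * (G.degree j : ℝ)) /
      ((G.degree i : ℝ) + (G.degree j : ℝ)), by
        intro a b
        simp only
        rw [mul_comm ((G.degree a : ℝ)), add_comm ((G.degree a : ℝ))]⟩ e

lemma sq_two_mul_sqrt_mul_div_add_le {a b : ℝ} (hab : 0 ≤ a * b) :
    (2 * √(a * b) / (a + b)) ^ 2 ≤ 4 * (a * b / (a ^ 2 + b ^ 2)) := by
  have sq_add_sq_le : a ^ 2 + b ^ 2 ≤ (a + b) ^ 2 := by linarith [add_sq a b]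
  rcases eq_or_ne a 0 with rfl | a_ne_zero
  · simp
  · calc (2 * √(a * b) / (a + b)) ^ 2 = 4 * (a * b / (a + b) ^ 2) := by
          rw [div_pow, mul_pow, Real.sq_sqrt hab]
          ring
      _ ≤ 4 * (a * b / (a ^ 2 + b ^ 2)) := by gcongr

/-- If `G` has `m ≥ 1` edges, then `ISDD(G) ≥ GA(G)²/(4m)`. -/
theorem stmt_13 {V : Type*} [Fintype V] [DecidableEq V] (G : SimpleGraph V)
    [DecidableRel G.Adj] (m : ℕ) (hm : m = G.edgeFinset.card) (hm1 : 1 ≤ m) :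
    ISDD G ≥ (GA G) ^ 2 / (4 * (m : ℝ)) := by
  rw [ge_iff_le, div_le_iff₀' (mul_pos four_pos (Nat.cast_pos.mpr hm1))]
  calc GA G ^ 2 ≤ (∑ _e ∈ G.edgeFinset, 4) * ISDD G := by
        refine Finset.sum_sq_le_sum_mul_sum_of_sq_le_mul _ (fun _ _ => by norm_num) ?_ ?_
        · rintro ⟨u, v⟩ -
          change (0 : ℝ) ≤ G.degree u * G.degree v / (G.degree u ^ 2 + G.degree v ^ 2)
          positivity
        · rintro ⟨u, v⟩ -
          exact sq_two_mul_sqrt_mul_div_add_le (by positivity)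
    _ = 4 * m * ISDD G := by rw [Finset.sum_const, nsmul_eq_mul, ← hm, mul_comm (m : ℝ)]
end

section
/- Let G be a finite simple graph with m ≥ 1 edges and maximum degree Δ. Then ISDD(G) > GA(G)²/(4m); that is, the inequality ISDD(G) ≥ GA(G)²/(4m) is always strict for a graph with at least one edge. -/
/-!
On an edge with end degrees `a, b > 0`, the squared term of `GA` is `4ab / (a + b)²`, which is less
than four times the term `ab / (a² + b²)` of `ISDD` because `a² + b² < (a + b)²`. Summing over the
edges and applying the Cauchy–Schwarz inequality gives `GA² ≤ m · ∑ (terms of GA)² < 4m · ISDD`.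
-/

theorem sq_sum_lt_card_mul_sum_of_sq_lt {ι R : Type*} [Semiring R] [LinearOrder R]
    [IsStrictOrderedRing R] [ExistsAddOfLE R] {s : Finset ι} (hs : s.Nonempty) {f g : ι → R}
    (hfg : ∀ i ∈ s, f i ^ 2 < g i) :
    (∑ i ∈ s, f i) ^ 2 < s.card * ∑ i ∈ s, g i := by
  have hcard : (0 : R) < s.card := Nat.cast_pos.mpr hs.card_pos
  calc (∑ i ∈ s, f i) ^ 2
      ≤ s.card * ∑ i ∈ s, f i ^ 2 := sq_sum_le_card_mul_sum_sq
    _ < s.card * ∑ i ∈ s, g i :=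
      mul_lt_mul_of_pos_left (Finset.sum_lt_sum_of_nonempty hs hfg) hcard

theorem sq_add_sq_lt_add_sq {R : Type*} [CommSemiring R] [PartialOrder R] [IsStrictOrderedRing R]
    {a b : R} (ha : 0 < a) (hb : 0 < b) : a ^ 2 + b ^ 2 < (a + b) ^ 2 := by
  have hab : 0 < 2 * a * b := by positivity
  calc a ^ 2 + b ^ 2 < a ^ 2 + b ^ 2 + 2 * a * b := lt_add_of_pos_right _ hab
    _ = (a + b) ^ 2 := by ring

theorem sq_two_mul_sqrt_mul_div_add_lt {a b : ℝ} (ha : 0 < a) (hb : 0 < b) :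
    (2 * √(a * b) / (a + b)) ^ 2 < 4 * (a * b / (a ^ 2 + b ^ 2)) := by
  have hab : 0 < a * b := mul_pos ha hb
  calc (2 * √(a * b) / (a + b)) ^ 2
      = 4 * (a * b / (a + b) ^ 2) := by
        rw [div_pow, mul_pow, Real.sq_sqrt hab.le]
        ring
    _ < 4 * (a * b / (a ^ 2 + b ^ 2)) := by
        gcongr
        exact sq_add_sq_lt_add_sq ha hb

theorem sq_GA_lt_card_mul_four_mul_ISDD {V : Type*} [Fintype V] [DecidableEq V] {G : SimpleGraph V}
    [DecidableRel G.Adj] (hG : G.edgeFinset.Nonempty) :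
    GA G ^ 2 < G.edgeFinset.card * (4 * ISDD G) := by
  rw [GA, ISDD, Finset.mul_sum]
  refine sq_sum_lt_card_mul_sum_of_sq_lt hG fun e he => ?_
  induction e using Sym2.ind with
  | _ i j =>
    have hadj : G.Adj i j := SimpleGraph.mem_edgeFinset.mp he
    exact sq_two_mul_sqrt_mul_div_add_lt (Nat.cast_pos.mpr hadj.degree_pos_left)
      (Nat.cast_pos.mpr hadj.degree_pos_right)

/-- If `G` has `m ≥ 1` edges, then `ISDD(G) > GA(G)²/(4m)`. -/
theorem stmt_16 {V : Type*} [Fintype V] [DecidableEq V] (G : SimpleGraph V)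
    [DecidableRel G.Adj] (m : ℕ) (hm : m = G.edgeFinset.card) (hm1 : 1 ≤ m) :
    ISDD G > (GA G) ^ 2 / (4 * (m : ℝ)) := by
  have hG : G.edgeFinset.Nonempty := Finset.card_pos.mp (hm ▸ hm1)
  rw [gt_iff_lt, div_lt_iff₀ (by positivity)]
  calc GA G ^ 2 < G.edgeFinset.card * (4 * ISDD G) := sq_GA_lt_card_mul_four_mul_ISDD hG
    _ = ISDD G * (4 * m) := by rw [hm]; ring
end

section
/- Let G be a finite simple graph with m ≥ 1 edges. Then ISDD(G) ≥ M₁(G)²/(2·F(G)) − m/2. -/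
/-- The first Zagreb index `M₁(G) = Σ_{v ∈ V(G)} d_v²`. -/
noncomputable def M1 {V : Type*} [Fintype V] [DecidableEq V] (G : SimpleGraph V)
    [DecidableRel G.Adj] : ℝ :=
  ∑ v : V, (G.degree v : ℝ) ^ 2

/-- The forgotten topological index `F(G) = Σ_{v ∈ V(G)} d_v³`. -/
noncomputable def forgotten {V : Type*} [Fintype V] [DecidableEq V] (G : SimpleGraph V)
    [DecidableRel G.Adj] : ℝ :=
  ∑ v : V, (G.degree v : ℝ) ^ 3

/-!
On an edge `s(i, j)`, `2·dᵢdⱼ/(dᵢ² + dⱼ²) + 1 = (dᵢ + dⱼ)²/(dᵢ² + dⱼ²)`. Summing over the edges, the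
left-hand side gives `2·ISDD(G) + m`, and the Cauchy–Schwarz inequality bounds the right-hand side
below by `M₁(G)²/F(G)`, because `M₁` and `F` are the edge sums of `dᵢ + dⱼ` and of `dᵢ² + dⱼ²`. The
degrees in these edge expressions may be replaced by any vertex weights
that do not vanish at both ends of an edge.
-/

open Finset

section EndpointSum

variable {V M : Type*} [AddCommMonoid M]

/-- The sum `f i + f j` over the endpoints of an unordered pair `s(i, j)`, used to write degree
sums as edge sums. On a diagonal pair `s(i, i)` it is `f i + f i`. -/
def endpointSum (f : V → M) : Sym2 V → M :=
  Sym2.lift ⟨fun i j => f i + f j, fun _ _ => add_comm _ _⟩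

@[simp]
theorem endpointSum_mk (f : V → M) (i j : V) : endpointSum f s(i, j) = f i + f j := rfl

variable [Fintype V]

theorem sum_ite_mem_eq_endpointSum [DecidableEq V] (f : V → M) {e : Sym2 V} (he : ¬ e.IsDiag) :
    ∑ v, (if v ∈ e then f v else 0) = endpointSum f e := by
  induction e with
  | _ i j =>
    have filter_mem_eq_pair : ({v | v ∈ s(i, j)} : Finset V) = {i, j} := by ext v; simp
    rw [← sum_filter, filter_mem_eq_pair, sum_pair (by simpa using he), endpointSum_mk]

theorem sum_degree_nsmul_eq_sum_endpointSum (G : SimpleGraph V) [DecidableRel G.Adj] (f : V → M) :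
    ∑ v, G.degree v • f v = ∑ e ∈ G.edgeFinset, endpointSum f e := by
  classical
  calc ∑ v, G.degree v • f v
      = ∑ v, ∑ e ∈ G.edgeFinset, (if v ∈ e then f v else 0) := by
        simp only [← sum_filter, sum_const, ← G.incidenceFinset_eq_filter,
          G.card_incidenceFinset_eq_degree]
    _ = ∑ e ∈ G.edgeFinset, ∑ v, (if v ∈ e then f v else 0) := sum_comm
    _ = ∑ e ∈ G.edgeFinset, endpointSum f e :=
        sum_congr rfl fun _ he =>
          sum_ite_mem_eq_endpointSum f (G.not_isDiag_of_mem_edgeFinset he)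

theorem sum_degree_mul_eq_sum_endpointSum {R : Type*} [NonAssocSemiring R] (G : SimpleGraph V)
    [DecidableRel G.Adj] (f : V → R) :
    ∑ v, G.degree v * f v = ∑ e ∈ G.edgeFinset, endpointSum f e := by
  simpa only [nsmul_eq_mul] using sum_degree_nsmul_eq_sum_endpointSum G f

end EndpointSum

section InvSymmDivision

variable {V K : Type*} [Field K]

/-- The summand `wᵢwⱼ/(wᵢ² + wⱼ²)` of the inverse symmetric division index at the pair `s(i, j)`,
for vertex weights `w` in place of the degrees. It is `0` when `wᵢ² + wⱼ² = 0`. -/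
def invSymmDivision (w : V → K) : Sym2 V → K :=
  Sym2.lift ⟨fun i j => w i * w j / (w i ^ 2 + w j ^ 2), fun i j => by ring⟩

@[simp]
theorem invSymmDivision_mk (w : V → K) (i j : V) :
    invSymmDivision w s(i, j) = w i * w j / (w i ^ 2 + w j ^ 2) := rfl

theorem two_mul_invSymmDivision_add_one {w : V → K} {e : Sym2 V}
    (he : endpointSum (w ^ 2) e ≠ 0) :
    2 * invSymmDivision w e + 1 = endpointSum w e ^ 2 / endpointSum (w ^ 2) e := by
  induction e with
  | _ i j =>
    simp only [endpointSum_mk, invSymmDivision_mk, Pi.pow_apply] at he ⊢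
    field_simp
    ring

variable [LinearOrder K] [IsStrictOrderedRing K]

theorem endpointSum_sq_pos {w : V → K} {e : Sym2 V} (he : ∃ v ∈ e, w v ≠ 0) :
    0 < endpointSum (w ^ 2) e := by
  induction e with
  | _ i j =>
    rw [endpointSum_mk, Pi.pow_apply, Pi.pow_apply]
    obtain ⟨v, hv, hwv⟩ := he
    obtain rfl | rfl := Sym2.mem_iff.mp hv <;> positivity

variable [Fintype V] (G : SimpleGraph V) [DecidableRel G.Adj]

theorem sum_degree_mul_sq_pos (hG : G.edgeFinset.Nonempty) {w : V → K}
    (hw : ∀ e ∈ G.edgeFinset, ∃ v ∈ e, w v ≠ 0) :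
    0 < ∑ v, G.degree v * w v ^ 2 :=
  calc 0 < ∑ e ∈ G.edgeFinset, endpointSum (w ^ 2) e :=
        sum_pos (fun e he => endpointSum_sq_pos (hw e he)) hG
    _ = ∑ v, G.degree v * w v ^ 2 := (sum_degree_mul_eq_sum_endpointSum G (w ^ 2)).symm

theorem sq_sum_degree_mul_le {w : V → K} (hw : ∀ e ∈ G.edgeFinset, ∃ v ∈ e, w v ≠ 0) :
    (∑ v, G.degree v * w v) ^ 2 ≤ (∑ v, G.degree v * w v ^ 2) *
      (2 * ∑ e ∈ G.edgeFinset, invSymmDivision w e + #G.edgeFinset) := by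
  have hpos : ∀ e ∈ G.edgeFinset, 0 < endpointSum (w ^ 2) e := fun e he =>
    endpointSum_sq_pos (hw e he)
  calc (∑ v, G.degree v * w v) ^ 2
      = (∑ e ∈ G.edgeFinset, endpointSum w e) ^ 2 := by
        rw [sum_degree_mul_eq_sum_endpointSum]
    _ ≤ (∑ e ∈ G.edgeFinset, endpointSum (w ^ 2) e) *
          ∑ e ∈ G.edgeFinset, endpointSum w e ^ 2 / endpointSum (w ^ 2) e :=
        sum_sq_le_sum_mul_sum_of_sq_le_mul _ (fun e he => (hpos e he).le)
          (fun e he => div_nonneg (sq_nonneg _) (hpos e he).le)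
          (fun e he => (mul_div_cancel₀ _ (hpos e he).ne').ge)
    _ = (∑ v, G.degree v * w v ^ 2) *
          ∑ e ∈ G.edgeFinset, (2 * invSymmDivision w e + 1) :=
        congrArg₂ (· * ·) (sum_degree_mul_eq_sum_endpointSum G (w ^ 2)).symm
          (sum_congr rfl fun e he => (two_mul_invSymmDivision_add_one (hpos e he).ne').symm)
    _ = (∑ v, G.degree v * w v ^ 2) *
          (2 * ∑ e ∈ G.edgeFinset, invSymmDivision w e + #G.edgeFinset) := by
        rw [sum_add_distrib, ← mul_sum, sum_const, nsmul_one]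

theorem stmt_18_general (hG : G.edgeFinset.Nonempty) {w : V → K}
    (hw : ∀ e ∈ G.edgeFinset, ∃ v ∈ e, w v ≠ 0) :
    (∑ v, G.degree v * w v) ^ 2 / (2 * ∑ v, G.degree v * w v ^ 2) - #G.edgeFinset / 2 ≤
      ∑ e ∈ G.edgeFinset, invSymmDivision w e := by
  have hpos := sum_degree_mul_sq_pos G hG hw
  rw [sub_le_iff_le_add, div_le_iff₀ (by positivity)]
  linarith only [sq_sum_degree_mul_le G hw]

end InvSymmDivision

section Degree

variable {V : Type*} [Fintype V] (G : SimpleGraph V) [DecidableRel G.Adj]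

theorem exists_mem_degree_ne_zero {e : Sym2 V} (he : e ∈ G.edgeFinset) :
    ∃ v ∈ e, G.degree v ≠ 0 := by
  induction e with
  | _ i j =>
    have hij : G.Adj i j := by simpa using he
    exact ⟨i, Sym2.mem_mk_left i j, hij.degree_pos_left.ne'⟩

variable [DecidableEq V]

theorem ISDD_eq_sum_invSymmDivision :
    ISDD G = ∑ e ∈ G.edgeFinset, invSymmDivision (fun v => (G.degree v : ℝ)) e := rfl

theorem M1_eq_sum_degree_mul_degree : M1 G = ∑ v, (G.degree v : ℝ) * G.degree v := by
  simp only [M1, sq]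

theorem forgotten_eq_sum_degree_mul_degree_sq :
    forgotten G = ∑ v, (G.degree v : ℝ) * (G.degree v : ℝ) ^ 2 := by
  simp only [forgotten, pow_succ' _ 2]

end Degree

/-- If `G` has `m ≥ 1` edges, then
`ISDD(G) ≥ M₁(G)²/(2·F(G)) − m/2`. -/
theorem stmt_18 {V : Type*} [Fintype V] [DecidableEq V] (G : SimpleGraph V)
    [DecidableRel G.Adj] (m : ℕ) (hm : m = G.edgeFinset.card) (hm1 : 1 ≤ m) :
    ISDD G ≥ (M1 G) ^ 2 / (2 * forgotten G) - (m : ℝ) / 2 := by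
  rw [hm, ISDD_eq_sum_invSymmDivision, M1_eq_sum_degree_mul_degree,
    forgotten_eq_sum_degree_mul_degree_sq]
  exact stmt_18_general G (card_pos.mp (hm ▸ hm1)) fun _ he => by
    exact_mod_cast exists_mem_degree_ne_zero G he
end
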